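/- Assume the Riemann Hypothesis. Let Z = (S_Z, m_Z) and P = (S_P, m_P) be disjoint multisets contained in the strip 1/2 < Re s < 1 such that the set S_Z ∪ S_P has no accumulation points in ℂ off the line Re s = 1/2. Then there exists a completely multiplicative function χ : ℕ → {1, e^{2πi/3}, e^{-2πi/3}} and a meromorphic function F on the half-plane Re s > 1/2 such that F(s) = ζ_χ(s) = ∑_{n=1}^∞ χ(n) n^{-s} for Re s > 1, the zeros of F in the half-plane Re s > 1/2 are exactly the points of S_Z with the zero at s having multiplicity m_Z(s), and the poles of F are exactly the points of S_P with the pole at s having order m_P(s). -/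

import Mathlib

/-!
Write `U` for the half-plane `1/2 < Re s`. The Helson zeta function of `χ` is, for `1 < Re s`, the
exponential of `∑_p χ(p) p^{-s}` plus the contribution of higher prime powers (`eulerRem`), and the
latter is holomorphic on `U`. So it suffices to control the Dirichlet series over the primes.

*One zero.* Under the Riemann Hypothesis the prime zeta function is
`P(w) = ∑_p p^{-w} = V(w) - log (w - 1)` with `V` holomorphic on `U`
(`exists_primeZeta_continuation`). For `ρ` in the strip put `a = 1/2 + i Im ρ`, `r = Re ρ - 1/2`.
The coefficients `h(p) = p^{a-1} (p^r - ∑_{k<M} (r log p)^k / k!)` are at most `(2r)^M` in absolute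
value, and `∑_p h(p) p^{-s}` is the Taylor remainder of order `M` of `P` from `w = s + 1 - a` to
`w - r`. The logarithmic part of `P` turns it into `-log ((s - ρ)/(s - a))` plus a Taylor polynomial
in `r/(s - a)`, up to the remainder of `V`, which is holomorphic on `U` and tends to `0` as `M → ∞`.
Hence `exp (-m ∑_p h(p) p^{-s})` continues to `U` with a single zero, at `ρ`, of order `m`; for
large `M` it is close to `1` on compact sets where `|s - a| ≥ 2r` (`exists_pointFactor`).

*All zeros.* Points accumulating only on the critical line satisfy `r → 0` or `|Im ρ| → ∞`, so an
infinite product of such factors, with `M` growing, converges on `U` and has exactly the prescribed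
zeros; the coefficients add up to at most `1/16` (`exists_zeroFunction`). This is done for the zeros
and for the poles, giving `G_Z, f_Z` and `G_P, f_P`.

*Cube roots of unity.* With `f = f_P - f_Z`, the values `χ(p)` are chosen greedily so that the sums
`∑_{p ≤ x} (χ(p) - f(p))` stay bounded (`exists_greedy`). Then `∑_p (χ(p) - f(p)) p^{-s}` continues
to a function `D` holomorphic on `0 < Re s`, and the required function is
`exp (D + eulerRem χ) * G_Z / G_P`.
-/

open Complex Filter Set

/-- A completely multiplicative function: `χ 1 = 1` and `χ (m*n) = χ m * χ n`. -/
def CompletelyMultiplicative (χ : ℕ → ℂ) : Prop :=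
  χ 1 = 1 ∧ ∀ m n : ℕ, χ (m * n) = χ m * χ n

/-- The Helson zeta function `ζ_χ(s) = ∑_{n ≥ 1} χ(n) n^{-s}`. -/
noncomputable def helsonZeta (χ : ℕ → ℂ) (s : ℂ) : ℂ :=
  ∑' n : ℕ, χ (n + 1) * ((n : ℂ) + 1) ^ (-s)

/-- `F` has a zero of multiplicity `k` at `s`. -/
def ZeroOfOrder (F : ℂ → ℂ) (s : ℂ) (k : ℕ) : Prop :=
  ∃ g : ℂ → ℂ, AnalyticAt ℂ g s ∧ g s ≠ 0 ∧ ∀ᶠ z in nhds s, F z = (z - s) ^ k * g z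

/-- `F` has a pole of order `k` at `s`. -/
def PoleOfOrder (F : ℂ → ℂ) (s : ℂ) (k : ℕ) : Prop :=
  ∃ g : ℂ → ℂ, AnalyticAt ℂ g s ∧ g s ≠ 0 ∧
    ∀ᶠ z in nhdsWithin s {s}ᶜ, F z = (z - s) ^ (-(k : ℤ)) * g z

/-! ### Dirichlet series over the primes and Euler products -/

/-- The coefficient sequence `c` restricted to the primes. -/
noncomputable def onPrimes (c : ℕ → ℂ) : ℕ → ℂ := fun n => if n.Prime then c n else 0

lemma norm_onPrimes_le {c : ℕ → ℂ} {C : ℝ} (hC : 0 ≤ C) (hc : ∀ n, n.Prime → ‖c n‖ ≤ C) (n : ℕ) :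
    ‖onPrimes c n‖ ≤ C := by
  unfold onPrimes
  split_ifs with h
  · exact hc n h
  · simpa using hC

lemma lseriesSummable_onPrimes {c : ℕ → ℂ} {C : ℝ} (hc : ∀ n, n.Prime → ‖c n‖ ≤ C) {s : ℂ}
    (hs : 1 < s.re) : LSeriesSummable (onPrimes c) s := by
  have hC : 0 ≤ C := (norm_nonneg _).trans (hc 2 Nat.prime_two)
  refine LSeriesSummable_of_bounded_of_one_lt_re (m := C) (fun n _ => norm_onPrimes_le hC hc n) hs

/-- The contribution of the higher prime powers to the logarithm of an Euler product. -/
noncomputable def eulerRem (χ : ℕ → ℂ) (s : ℂ) : ℂ :=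
  ∑' n : ℕ, if n.Prime then -log (1 - χ n * (n : ℂ) ^ (-s)) - χ n * (n : ℂ) ^ (-s) else 0

lemma norm_prime_cpow_le {χ : ℕ → ℂ} (hχ : ∀ n, ‖χ n‖ ≤ 1) {n : ℕ} (hn : n.Prime) {s : ℂ} {σ : ℝ}
    (hs : σ ≤ s.re) : ‖χ n * (n : ℂ) ^ (-s)‖ ≤ (n : ℝ) ^ (-σ) := by
  rw [norm_mul, Complex.norm_natCast_cpow_of_pos hn.pos]
  calc _ ≤ 1 * (n : ℝ) ^ (-s).re := by gcongr; exact hχ n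
    _ ≤ _ := by
      rw [one_mul]
      apply Real.rpow_le_rpow_of_exponent_le
      · exact_mod_cast hn.one_le
      · simpa using hs

lemma prime_rpow_le {n : ℕ} (hn : n.Prime) {σ : ℝ} (hσ : 1 / 2 ≤ σ) : (n : ℝ) ^ (-σ) ≤ 3 / 4 := by
  have h2 : (2 : ℝ) ≤ n := by exact_mod_cast hn.two_le
  calc (n : ℝ) ^ (-σ) ≤ (n : ℝ) ^ (-(1/2) : ℝ) :=
        Real.rpow_le_rpow_of_exponent_le (by linarith) (by linarith)
    _ ≤ (2 : ℝ) ^ (-(1/2) : ℝ) := Real.rpow_le_rpow_of_nonpos (by norm_num) h2 (by norm_num)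
    _ ≤ 3 / 4 := by
      rw [Real.rpow_neg (by norm_num), ← Real.sqrt_eq_rpow]
      rw [inv_le_comm₀ (by positivity) (by norm_num)]
      apply Real.le_sqrt_of_sq_le
      norm_num

/-- The terms of `eulerRem` are quadratic in `n^{-s}`, hence summable for `1/2 < Re s`. -/
lemma norm_eulerRem_term_le {χ : ℕ → ℂ} (hχ : ∀ n, ‖χ n‖ ≤ 1) (n : ℕ) {s : ℂ} {σ : ℝ}
    (hσ : 1 / 2 ≤ σ) (hs : σ ≤ s.re) :
    ‖(if n.Prime then -log (1 - χ n * (n : ℂ) ^ (-s)) - χ n * (n : ℂ) ^ (-s) else 0 : ℂ)‖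
      ≤ 2 * (n : ℝ) ^ (-(2 * σ)) := by
  split_ifs with hn
  · set z := χ n * (n : ℂ) ^ (-s)
    have h1 : ‖z‖ ≤ (n : ℝ) ^ (-σ) := norm_prime_cpow_le hχ hn hs
    have h2 := prime_rpow_le hn hσ
    have h3 := norm_log_one_add_sub_self_le (z := -z) (by rw [norm_neg]; linarith)
    rw [norm_neg] at h3
    have h4 : (n : ℝ) ^ (-(2 * σ)) = ((n : ℝ) ^ (-σ)) ^ 2 := by
      rw [← Real.rpow_natCast, ← Real.rpow_mul (by positivity)]; congr 1; push_cast; ring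
    rw [h4]
    have h5 : -log (1 - z) - z = -(log (1 + -z) - -z) := by ring_nf
    rw [h5, norm_neg]
    refine h3.trans ?_
    have h6 : (1 - ‖z‖)⁻¹ ≤ 4 := by
      rw [inv_le_comm₀ (by linarith) (by norm_num)]; linarith
    have h7 : 0 ≤ (1 - ‖z‖)⁻¹ := inv_nonneg.2 (by linarith)
    calc _ ≤ ((n : ℝ) ^ (-σ)) ^ 2 * 4 / 2 := by gcongr
      _ = _ := by ring
  · simp; positivity

lemma summable_eulerRem {χ : ℕ → ℂ} (hχ : ∀ n, ‖χ n‖ ≤ 1) {s : ℂ} (hs : 1 / 2 < s.re) :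
    Summable (fun n : ℕ => (if n.Prime then
      -log (1 - χ n * (n : ℂ) ^ (-s)) - χ n * (n : ℂ) ^ (-s) else 0 : ℂ)) := by
  refine Summable.of_norm_bounded (g := fun n : ℕ => 2 * (n : ℝ) ^ (-(2 * s.re))) ?_ ?_
  · exact (Real.summable_nat_rpow.2 (by linarith)).mul_left 2
  · exact fun n => norm_eulerRem_term_le hχ n hs.le le_rfl

lemma differentiableOn_eulerRem {χ : ℕ → ℂ} (hχ : ∀ n, ‖χ n‖ ≤ 1) :
    DifferentiableOn ℂ (eulerRem χ) {s : ℂ | 1 / 2 < s.re} := by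
  intro s hs
  obtain ⟨σ, h1, h2⟩ := exists_between (show 1 / 2 < s.re from hs)
  have hopen : IsOpen {z : ℂ | σ < z.re} := isOpen_lt continuous_const Complex.continuous_re
  have := differentiableOn_tsum_of_summable_norm (u := fun n : ℕ => 2 * (n : ℝ) ^ (-(2 * σ)))
    (F := fun n s => (if n.Prime then
      -log (1 - χ n * (n : ℂ) ^ (-s)) - χ n * (n : ℂ) ^ (-s) else 0 : ℂ))
    ((Real.summable_nat_rpow.2 (by linarith)).mul_left 2) (U := {z : ℂ | σ < z.re}) ?_ hopen
    (fun n w hw => norm_eulerRem_term_le hχ n h1.le (le_of_lt hw))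
  · exact (this.differentiableAt (hopen.mem_nhds h2)).differentiableWithinAt
  · intro n
    by_cases hn : n.Prime
    · simp only [if_pos hn]
      have hn0 : (n : ℂ) ≠ 0 := by exact_mod_cast hn.ne_zero
      intro w hw
      have hz : ‖χ n * (n : ℂ) ^ (-w)‖ < 1 :=
        ((norm_prime_cpow_le hχ hn (le_of_lt hw)).trans (prime_rpow_le hn h1.le)).trans_lt
          (by norm_num)
      have hd : DifferentiableAt ℂ (fun w : ℂ => χ n * (n : ℂ) ^ (-w)) w := by
        refine DifferentiableAt.const_mul ?_ _
        exact (differentiableAt_id.neg).const_cpow (Or.inl hn0)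
      refine DifferentiableAt.differentiableWithinAt ?_
      refine DifferentiableAt.sub (DifferentiableAt.neg (DifferentiableAt.clog ?_ ?_)) hd
      · exact hd.const_sub 1
      · have := mem_slitPlane_of_norm_lt_one (z := -(χ n * (n : ℂ) ^ (-w))) (by rwa [norm_neg])
        simpa [sub_eq_add_neg] using this
    · simp only [if_neg hn]
      exact differentiableOn_const _

/-- The logarithmic form of the Euler product. -/
lemma exp_onPrimes_add_eulerRem (χ : ℕ →*₀ ℂ) (hχ : ∀ n, ‖χ n‖ ≤ 1) {s : ℂ} (hs : 1 < s.re) :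
    exp (LSeries (onPrimes χ) s + eulerRem χ s) = ∑' n : ℕ, χ n * (n : ℂ) ^ (-s) := by
  have hs0 : s ≠ 0 := by rintro rfl; simp at hs; linarith
  let f : ℕ →*₀ ℂ := χ * riemannZetaSummandHom hs0
  have hf : ∀ n, f n = χ n * (n : ℂ) ^ (-s) := fun n => rfl
  have hsum : Summable (‖f ·‖) := by
    refine Summable.of_nonneg_of_le (fun _ => norm_nonneg _) (fun n => ?_)
      (summable_riemannZetaSummand hs)
    change ‖χ n * riemannZetaSummandHom hs0 n‖ ≤ _
    rw [norm_mul]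
    exact mul_le_of_le_one_left (norm_nonneg _) (hχ n)
  rw [← tsum_congr hf, ← EulerProduct.exp_tsum_primes_log_eq_tsum hsum]
  congr 1
  rw [LSeries, eulerRem, ← Summable.tsum_add
    (lseriesSummable_onPrimes (C := 1) (fun n _ => hχ n) hs) (summable_eulerRem hχ (by linarith))]
  have := tsum_subtype {n : ℕ | n.Prime} (fun n => -log (1 - f n))
  refine Eq.trans ?_ this.symm
  refine tsum_congr fun n => ?_
  by_cases hn : n.Prime
  · rw [Set.indicator_of_mem (by exact hn), if_pos hn, LSeries.term_of_ne_zero hn.ne_zero,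
      onPrimes, if_pos hn, hf, cpow_neg, div_eq_mul_inv]
    ring
  · rw [Set.indicator_of_notMem (by exact hn), if_neg hn]
    by_cases h0 : n = 0
    · simp [h0]
    · rw [LSeries.term_of_ne_zero h0, onPrimes, if_neg hn]; simp

/-! ### The prime zeta function under the Riemann Hypothesis -/

/-- A zero-free holomorphic function on the half-plane `Re > 1/2` has a holomorphic logarithm. -/
lemma exists_log_halfPlane {g : ℂ → ℂ} (hg : DifferentiableOn ℂ g {s : ℂ | 1 / 2 < s.re})
    (h0 : ∀ s : ℂ, 1 / 2 < s.re → g s ≠ 0) :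
    ∃ Q : ℂ → ℂ, DifferentiableOn ℂ Q {s : ℂ | 1 / 2 < s.re} ∧
      ∀ s : ℂ, 1 / 2 < s.re → exp (Q s) = g s := by
  -- The half-plane is carried to the unit disc by `s ↦ (s - 3/2) / (s + 1/2)`.
  set U : Set ℂ := {s : ℂ | 1 / 2 < s.re} with hU
  have hUo : IsOpen U := isOpen_lt continuous_const Complex.continuous_re
  let φ : ℂ → ℂ := fun z => 1 / 2 + (1 + z) / (1 - z)
  let ψ : ℂ → ℂ := fun s => (s - 3 / 2) / (s + 1 / 2)
  have hne : ∀ z ∈ Metric.ball (0 : ℂ) 1, 1 - z ≠ 0 := by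
    intro z hz h
    have : z = 1 := (sub_eq_zero.1 h).symm
    simp [this] at hz
  have hφ : MapsTo φ (Metric.ball 0 1) U := by
    intro z hz
    have hz1 : normSq z < 1 := by
      rw [Complex.normSq_eq_norm_sq]
      have : ‖z‖ < 1 := by simpa using hz
      nlinarith [norm_nonneg z]
    have hpos : 0 < normSq (1 - z) := normSq_pos.2 (hne z hz)
    have : ((1 + z) / (1 - z)).re = (1 - normSq z) / normSq (1 - z) := by
      rw [Complex.div_re]
      simp only [normSq_apply, add_re, one_re, sub_re, add_im, one_im, sub_im]
      field_simp
      ring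
    change 1 / 2 < (1 / 2 + (1 + z) / (1 - z)).re
    rw [add_re, this]
    have : 0 < (1 - normSq z) / normSq (1 - z) := div_pos (by linarith) hpos
    norm_num
    exact this
  have hsne : ∀ s ∈ U, s + 1 / 2 ≠ 0 := by
    intro s hs h
    have := congrArg Complex.re h
    simp [hU] at this hs
    linarith
  have hψ : MapsTo ψ U (Metric.ball 0 1) := by
    intro s hs
    simp only [ψ, Metric.mem_ball, dist_zero_right, norm_div]
    rw [div_lt_one (norm_pos_iff.2 (hsne s hs))]
    rw [← sq_lt_sq₀ (norm_nonneg _) (norm_nonneg _), ← Complex.normSq_eq_norm_sq,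
      ← Complex.normSq_eq_norm_sq]
    simp only [normSq_apply, sub_re, sub_im, add_re, add_im]
    have : (1 : ℝ) / 2 < s.re := hs
    norm_num
    nlinarith
  have hφψ : ∀ s ∈ U, φ (ψ s) = s := by
    intro s hs
    have h1 := hsne s hs
    have h2 : 1 - ψ s ≠ 0 := hne _ (hψ hs)
    simp only [φ]
    have e1 : 1 - ψ s = 2 / (s + 1 / 2) := by
      simp only [ψ]; rw [eq_div_iff h1, sub_mul, div_mul_cancel₀ _ h1]; ring
    have e2 : 1 + ψ s = (2 * s - 1) / (s + 1 / 2) := by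
      simp only [ψ]; rw [eq_div_iff h1, add_mul, div_mul_cancel₀ _ h1]; ring
    rw [e1, e2, div_div_div_cancel_right₀ h1]; ring
  have hφd : DifferentiableOn ℂ φ (Metric.ball 0 1) := by
    intro z hz
    have := hne z hz
    exact (DifferentiableAt.const_add _ (by fun_prop (disch := assumption))).differentiableWithinAt
  have hψd : DifferentiableOn ℂ ψ U := by
    intro s hs
    have := hsne s hs
    exact DifferentiableAt.differentiableWithinAt (by fun_prop (disch := assumption))
  let G := g ∘ φ
  have hG : DifferentiableOn ℂ G (Metric.ball 0 1) := hg.comp hφd hφ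
  have hG0 : ∀ z ∈ Metric.ball (0 : ℂ) 1, G z ≠ 0 := fun z hz => h0 _ (hφ hz)
  have hG' : DifferentiableOn ℂ (fun z => deriv G z / G z) (Metric.ball 0 1) :=
    (hG.deriv Metric.isOpen_ball).div hG hG0
  have hz0 : (0 : ℂ) ∈ Metric.ball (0 : ℂ) 1 := by simp
  obtain ⟨q, hq0, hq⟩ := hG'.isExactOn_ball.with_val_at 0 (log (G 0))
  have hGd : ∀ z ∈ Metric.ball (0 : ℂ) 1, HasDerivAt G (deriv G z) z := fun z hz =>
    (hG.differentiableAt (Metric.isOpen_ball.mem_nhds hz)).hasDerivAt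
  have hr : ∀ z ∈ Metric.ball (0 : ℂ) 1, HasDerivAt (fun z => G z * exp (-q z)) 0 z := by
    intro z hz
    have := (hGd z hz).mul ((hq z hz).neg.cexp)
    have h0 : deriv G z * cexp ((-q) z) + G z * (cexp ((-q) z) * -(deriv G z / G z)) = 0 := by
      have := hG0 z hz
      field_simp
      ring
    rw [h0] at this
    exact this
  have hconst : ∀ z ∈ Metric.ball (0 : ℂ) 1, exp (q z) = G z := by
    intro z hz
    have := Metric.isOpen_ball.is_const_of_deriv_eq_zero (convex_ball (0 : ℂ) 1).isPreconnected
      (fun w hw => (hr w hw).differentiableAt.differentiableWithinAt)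
      (fun w hw => (hr w hw).deriv) hz hz0
    simp only [hq0, exp_neg, exp_log (hG0 0 hz0), mul_inv_cancel₀ (hG0 0 hz0)] at this
    have hne := exp_ne_zero (q z)
    field_simp at this
    exact this.symm
  refine ⟨q ∘ ψ, ?_, fun s hs => ?_⟩
  · exact DifferentiableOn.comp (fun z hz => (hq z hz).differentiableAt.differentiableWithinAt)
      hψd hψ
  · rw [Function.comp_apply, hconst _ (hψ hs)]
    simp only [G, Function.comp_apply, hφψ s hs]

/-- Under the Riemann Hypothesis the prime zeta function `∑ p^{-w}` equals `-log (w - 1)` up to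
a function holomorphic on `Re w > 1/2`. -/
lemma exists_primeZeta_continuation (hRH : RiemannHypothesis) :
    ∃ V : ℂ → ℂ, DifferentiableOn ℂ V {s : ℂ | 1 / 2 < s.re} ∧
      ∀ w : ℂ, 1 < w.re → LSeries (onPrimes 1) w = V w - log (w - 1) := by
  set U : Set ℂ := {s : ℂ | 1 / 2 < s.re} with hU
  have hUo : IsOpen U := isOpen_lt continuous_const Complex.continuous_re
  let g : ℂ → ℂ := Function.update (fun s => (s - 1) * riemannZeta s) 1 1
  have hgd : Differentiable ℂ g := by
    rw [← differentiableOn_univ]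
    refine (Complex.differentiableOn_compl_singleton_and_continuousAt_iff (c := (1 : ℂ))
      Filter.univ_mem).1 ⟨?_, ?_⟩
    · intro s hs
      have hs1 : s ≠ 1 := by simpa using hs
      refine DifferentiableAt.differentiableWithinAt ?_
      have : DifferentiableAt ℂ (fun s => (s - 1) * riemannZeta s) s :=
        (by fun_prop : DifferentiableAt ℂ (fun s : ℂ => s - 1) s).mul
          (differentiableAt_riemannZeta hs1)
      refine this.congr_of_eventuallyEq ?_
      filter_upwards [isOpen_ne.mem_nhds hs1] with z hz
      exact Function.update_of_ne hz _ _
    · exact continuousAt_update_same.2 riemannZeta_residue_one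
  have hg1 : ∀ s ≠ 1, g s = (s - 1) * riemannZeta s := fun s hs => Function.update_of_ne hs _ _
  have hg0 : ∀ s : ℂ, 1 / 2 < s.re → g s ≠ 0 := by
    intro s hs
    by_cases h1 : s = 1
    · rw [h1]; simp [g]
    · rw [hg1 s h1]
      refine mul_ne_zero (sub_ne_zero.2 h1) fun hz => ?_
      have := hRH s hz ?_ h1
      · linarith
      · rintro ⟨n, rfl⟩
        have : ((-2 : ℂ) * (n + 1)).re = -2 * ((n : ℝ) + 1) := by simp
        rw [this] at hs
        have : (0 : ℝ) ≤ n := n.cast_nonneg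
        linarith
  obtain ⟨Q, hQd, hQ⟩ := exists_log_halfPlane hgd.differentiableOn hg0
  -- the completely multiplicative function equal to `1` at all positive integers
  let χ : ℕ →*₀ ℂ :=
    { toFun := fun n => if n = 0 then 0 else 1
      map_zero' := by simp
      map_one' := by simp
      map_mul' := by intro m n; by_cases hm : m = 0 <;> by_cases hn : n = 0 <;> simp [hm, hn] }
  have hχ : ∀ n, ‖χ n‖ ≤ 1 := by
    intro n
    change ‖(if n = 0 then 0 else 1 : ℂ)‖ ≤ 1
    split_ifs <;> simp
  have hP : onPrimes χ = onPrimes 1 := by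
    funext n
    unfold onPrimes
    split_ifs with hn
    · change (if n = 0 then 0 else 1 : ℂ) = 1
      rw [if_neg hn.ne_zero]
    · rfl
  have hζ : ∀ w : ℂ, 1 < w.re → exp (LSeries (onPrimes 1) w + eulerRem χ w) = riemannZeta w := by
    intro w hw
    rw [← hP, exp_onPrimes_add_eulerRem χ hχ hw, zeta_eq_tsum_one_div_nat_cpow hw]
    refine tsum_congr fun n => ?_
    change (if n = 0 then 0 else 1 : ℂ) * _ = _
    split_ifs with hn
    · have : w ≠ 0 := by rintro rfl; simp at hw; linarith
      simp [hn, this]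
    · rw [cpow_neg]; simp
  let f : ℂ → ℂ := fun w => Q w - eulerRem χ w - LSeries (onPrimes 1) w - log (w - 1)
  let U1 : Set ℂ := {w : ℂ | 1 < w.re}
  have hU1 : IsOpen U1 := isOpen_lt continuous_const Complex.continuous_re
  have hU1c : IsPreconnected U1 := (convex_halfSpace_re_gt 1).isPreconnected
  have hU1U : U1 ⊆ U := fun w hw => by
    have : (1 : ℝ) < w.re := hw
    change (1 : ℝ) / 2 < w.re; linarith
  have hslit : ∀ w ∈ U1, w - 1 ∈ slitPlane := fun w hw => Or.inl (by
    have : (1 : ℝ) < w.re := hw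
    simpa using this)
  have habs : LSeries.abscissaOfAbsConv (onPrimes 1) ≤ 1 :=
    LSeries.abscissaOfAbsConv_le_of_forall_lt_LSeriesSummable fun y hy =>
      lseriesSummable_onPrimes (C := 1) (by simp) (by simpa using hy)
  have hPd : ∀ w ∈ U1, DifferentiableAt ℂ (LSeries (onPrimes 1)) w := by
    intro w hw
    refine ((LSeries_analyticOnNhd (onPrimes 1)) w ?_).differentiableAt
    refine lt_of_le_of_lt habs ?_
    exact_mod_cast (show (1 : ℝ) < w.re from hw)
  have hfd : ∀ w ∈ U1, DifferentiableAt ℂ f w := by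
    intro w hw
    refine ((DifferentiableAt.sub (hQd.differentiableAt (hUo.mem_nhds (hU1U hw)))
      ((differentiableOn_eulerRem hχ).differentiableAt (hUo.mem_nhds (hU1U hw)))).sub
      (hPd w hw)).sub ?_
    exact (by fun_prop : DifferentiableAt ℂ (fun w : ℂ => w - 1) w).clog (hslit w hw)
  have hexp : ∀ w ∈ U1, exp (f w) = 1 := by
    intro w hw
    have hw1 : w ≠ 1 := by rintro rfl; simp [U1] at hw
    have e : f w = Q w - (LSeries (onPrimes 1) w + eulerRem χ w) - log (w - 1) := by
      simp only [f]; ring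
    rw [e, exp_sub, exp_sub, hζ w hw, hQ w (hU1U hw), hg1 w hw1, exp_log (sub_ne_zero.2 hw1)]
    have := riemannZeta_ne_zero_of_one_lt_re hw
    have := sub_ne_zero.2 hw1
    field_simp
  have hder : ∀ w ∈ U1, deriv f w = 0 := by
    intro w hw
    have h1 : HasDerivAt (fun w => exp (f w)) (exp (f w) * deriv f w) w :=
      (hfd w hw).hasDerivAt.cexp
    have h2 : HasDerivAt (fun w => exp (f w)) 0 w := by
      refine (hasDerivAt_const w (1 : ℂ)).congr_of_eventuallyEq ?_
      filter_upwards [hU1.mem_nhds hw] with z hz using hexp z hz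
    have := h1.unique h2
    rwa [hexp w hw, one_mul] at this
  have h2 : (2 : ℂ) ∈ U1 := by simp [U1]
  refine ⟨fun w => Q w - eulerRem χ w - f 2, ?_, fun w hw => ?_⟩
  · exact (hQd.sub (differentiableOn_eulerRem hχ)).sub_const _
  · have := hU1.is_const_of_deriv_eq_zero hU1c
      (fun w hw => (hfd w hw).differentiableWithinAt) hder hw h2
    rw [← this]
    simp only [f]; ring

/-! ### Taylor remainders of the prime zeta function -/

/-- The remainder, at `w - r`, of the Taylor polynomial of `φ` of length `M` centred at `w`. -/
noncomputable def taylorRem (M : ℕ) (r : ℝ) (φ : ℂ → ℂ) (w : ℂ) : ℂ :=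
  φ (w - r) - ∑ k ∈ Finset.range M, iteratedDeriv k φ w * (-(r : ℂ)) ^ k / (k.factorial : ℂ)

/-- By Cauchy's estimates on discs of radius `1/2 > r`, the Taylor remainders tend to `0` uniformly
on compact sets. -/
lemma eventually_norm_taylorRem_le {V : ℂ → ℂ} (hV : DifferentiableOn ℂ V {s : ℂ | 1 / 2 < s.re})
    {r : ℝ} (hr0 : 0 < r) (hr : r < 1 / 2) {K : Set ℂ} (hK : IsCompact K)
    (hK1 : ∀ w ∈ K, 1 < w.re) {ε : ℝ} (hε : 0 < ε) :
    ∀ᶠ M in atTop, ∀ w ∈ K, ‖taylorRem M r V w‖ ≤ ε := by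
  have hcball : ∀ w ∈ K, Metric.closedBall w (1 / 2) ⊆ {s : ℂ | 1 / 2 < s.re} := by
    intro w hw z hz
    have h1 := hK1 w hw
    have h2 : ‖z - w‖ ≤ 1 / 2 := by simpa [dist_eq_norm] using hz
    have h3 := (abs_le.1 (Complex.abs_re_le_norm (z - w))).1
    rw [sub_re] at h3
    change 1 / 2 < z.re
    linarith
  obtain ⟨C, hC⟩ := (hK.cthickening (r := 1 / 2)).exists_bound_of_continuousOn (f := V) (by
    refine hV.continuousOn.mono ?_
    rw [hK.cthickening_eq_biUnion_closedBall (by norm_num)]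
    exact iUnion₂_subset hcball)
  rw [hK.cthickening_eq_biUnion_closedBall (by norm_num)] at hC
  have hq : 2 * r < 1 := by linarith
  have hbound : ∀ M : ℕ, ∀ w ∈ K, ‖taylorRem M r V w‖ ≤ C * (2 * r) ^ M / (1 - 2 * r) := by
    intro M w hw
    have hd : DifferentiableOn ℂ V (Metric.closedBall w (1 / 2)) := hV.mono (hcball w hw)
    have hmem : w - (r : ℂ) ∈ Metric.ball w (1 / 2) := by
      simpa [dist_eq_norm, abs_of_pos hr0] using hr
    have hs := hasSum_taylorSeries_on_ball (hd.mono Metric.ball_subset_closedBall) hmem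
    have hb : ∀ n : ℕ, ‖((n.factorial : ℂ))⁻¹ • (w - (r : ℂ) - w) ^ n • iteratedDeriv n V w‖
        ≤ C * (2 * r) ^ n := by
      intro n
      have h1 := norm_iteratedDeriv_le_of_forall_mem_sphere_norm_le (C := C) n
        (by norm_num : (0 : ℝ) < 1 / 2) (hd.diffContOnCl_ball subset_rfl)
        (fun z hz => hC z (mem_biUnion hw (Metric.sphere_subset_closedBall hz)))
      rw [norm_smul, norm_smul, norm_inv, norm_pow, Complex.norm_natCast]
      have h2 : ‖w - (r : ℂ) - w‖ = r := by simp [abs_of_pos hr0]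
      rw [h2]
      have hf : (0 : ℝ) < n.factorial := by exact_mod_cast n.factorial_pos
      calc _ ≤ (n.factorial : ℝ)⁻¹ * (r ^ n * (n.factorial * C / (1 / 2) ^ n)) := by gcongr
        _ = _ := by rw [mul_pow, one_div, inv_pow]; field_simp
    have := norm_sub_le_of_geometric_bound_of_hasSum hq hb hs M
    rw [norm_sub_rev] at this
    have e : taylorRem M r V w = V (w - r) - ∑ k ∈ Finset.range M,
        ((k.factorial : ℂ))⁻¹ • (w - (r : ℂ) - w) ^ k • iteratedDeriv k V w := by
      rw [taylorRem]
      congr 1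
      refine Finset.sum_congr rfl fun k _ => ?_
      simp only [smul_eq_mul]
      rw [show w - (r : ℂ) - w = -r by ring]
      ring
    rw [e]
    exact this
  have ht : Tendsto (fun M : ℕ => C * (2 * r) ^ M / (1 - 2 * r)) atTop (nhds 0) := by
    have := ((tendsto_pow_atTop_nhds_zero_of_lt_one (by linarith) hq).const_mul C).div_const
      (1 - 2 * r)
    simpa using this
  filter_upwards [ht.eventually (gt_mem_nhds hε)] with M hM w hw
  exact (hbound M w hw).trans hM.le

lemma differentiableAt_taylorRem {V : ℂ → ℂ} (hV : DifferentiableOn ℂ V {s : ℂ | 1 / 2 < s.re})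
    {r : ℝ} (hr : r < 1 / 2) (M : ℕ) {w : ℂ} (hw : 1 < w.re) :
    DifferentiableAt ℂ (taylorRem M r V) w := by
  have hUo : IsOpen {s : ℂ | 1 / 2 < s.re} := isOpen_lt continuous_const Complex.continuous_re
  have hA := hV.analyticOnNhd hUo
  unfold taylorRem
  refine DifferentiableAt.sub ?_ (DifferentiableAt.fun_sum fun k _ => ?_)
  · have hm : w - (r : ℂ) ∈ {s : ℂ | 1 / 2 < s.re} := by simp; linarith
    have h1 : DifferentiableAt ℂ V (w - r) := hV.differentiableAt (hUo.mem_nhds hm)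
    exact h1.comp w (by fun_prop)
  · have hm : w ∈ {s : ℂ | 1 / 2 < s.re} := by simp; linarith
    refine DifferentiableAt.div_const (DifferentiableAt.mul_const ?_ _) _
    rw [iteratedDeriv_eq_iterate]
    exact ((hA w hm).iterated_deriv k).differentiableAt

/-- The logarithmic part of the prime zeta function: its Taylor polynomial at `w` is, up to the
constant term, that of `log (1 + z)` at `z = -r / (w - 1)`. -/
lemma taylorRem_log (M : ℕ) {r : ℝ} {w : ℂ} (hw : 1 < w.re) :
    taylorRem (M + 1) r (fun w => log (w - 1)) w =
      log (w - 1 - r) - log (w - 1) - logTaylor (M + 1) (-((r : ℂ) / (w - 1))) := by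
  have hv : w - 1 ∈ slitPlane := Or.inl (by simpa using hw)
  have hv0 : w - 1 ≠ 0 := slitPlane_ne_zero hv
  unfold taylorRem logTaylor
  rw [Finset.sum_range_succ', Finset.sum_range_succ']
  simp only [iteratedDeriv_comp_sub_const, iteratedDeriv_succ_log hv]
  have : ∀ k ∈ Finset.range M, (-1 : ℂ) ^ k * (k.factorial : ℂ) * (w - 1) ^ (-(k : ℤ) - 1) *
      (-(r : ℂ)) ^ (k + 1) / ((k + 1).factorial : ℂ) =
      (-1) ^ (k + 1 + 1) * (-((r : ℂ) / (w - 1))) ^ (k + 1) / ((k + 1 : ℕ) : ℂ) := by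
    intro k _
    have e : (w - 1) ^ (-(k : ℤ) - 1) = ((w - 1) ^ (k + 1))⁻¹ := by
      rw [← zpow_natCast, ← zpow_neg]; congr 1; push_cast; ring
    have hf : (k.factorial : ℂ) ≠ 0 := by exact_mod_cast k.factorial_ne_zero
    have hk : ((k : ℂ) + 1) ≠ 0 := by exact_mod_cast k.succ_ne_zero
    rw [e, Nat.factorial_succ]
    rw [neg_pow (r : ℂ), neg_pow ((r : ℂ) / (w - 1)), div_pow]
    push_cast
    field_simp
    ring
  rw [Finset.sum_congr rfl this]
  simp [sub_right_comm]
  ring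

/-- The coefficients `n^{a-1} (n^r - ∑_{k<M} (r log n)^k / k!)`, whose Dirichlet series over the
primes is the Taylor remainder at `s + 1 - a` of the prime zeta function. -/
noncomputable def remCoeff (a : ℂ) (r : ℝ) (M : ℕ) (n : ℕ) : ℂ :=
  (n : ℂ) ^ (a - 1) * ((n : ℂ) ^ (r : ℂ) -
    ∑ k ∈ Finset.range M, ((r : ℂ) * log n) ^ k / (k.factorial : ℂ))

/-- The exponential remainder is at most `∑_{k ≥ M} (r log n)^k / k! ≤ (2r)^M n^{1/2}`, because
`2r < 1`; the factor `n^{1/2}` is cancelled by `|n^{a-1}|`. -/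
lemma norm_remCoeff_le {a : ℂ} (ha : a.re = 1 / 2) {r : ℝ} (hr0 : 0 < r) (hr : r < 1 / 2) (M : ℕ)
    {n : ℕ} (hn : 0 < n) : ‖remCoeff a r M n‖ ≤ (2 * r) ^ M := by
  set u : ℝ := Real.log n with hu
  have hu0 : 0 ≤ u := Real.log_natCast_nonneg n
  have hn' : (0 : ℝ) < n := by exact_mod_cast hn
  have hexp : ∀ x : ℝ, HasSum (fun k : ℕ => x ^ k / (k.factorial : ℝ)) (Real.exp x) := by
    intro x
    rw [Real.exp_eq_exp_ℝ]
    exact NormedSpace.expSeries_div_hasSum_exp x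
  have e1 : (n : ℂ) ^ (r : ℂ) - ∑ k ∈ Finset.range M, ((r : ℂ) * log n) ^ k / (k.factorial : ℂ)
      = ((Real.exp (r * u) - ∑ k ∈ Finset.range M, (r * u) ^ k / (k.factorial : ℝ) : ℝ) : ℂ) := by
    have : log (n : ℂ) = (u : ℂ) := by rw [hu, Complex.natCast_log]
    rw [cpow_def_of_ne_zero (by exact_mod_cast hn.ne'), this]
    push_cast
    rw [mul_comm (u : ℂ)]
  have e2 : Real.exp (r * u) - ∑ k ∈ Finset.range M, (r * u) ^ k / (k.factorial : ℝ)
      = ∑' k : ℕ, (r * u) ^ (k + M) / ((k + M).factorial : ℝ) := by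
    rw [← (hexp (r * u)).tsum_eq, ← (hexp (r * u)).summable.sum_add_tsum_nat_add M]
    ring
  have e3 : ∑' k : ℕ, (r * u) ^ (k + M) / ((k + M).factorial : ℝ) ≤ (2 * r) ^ M * Real.exp (u / 2) := by
    have hs1 := (summable_nat_add_iff M).2 (hexp (r * u)).summable
    have hs2 := (summable_nat_add_iff M).2 (hexp (u / 2)).summable
    calc _ ≤ ∑' k : ℕ, (2 * r) ^ M * ((u / 2) ^ (k + M) / ((k + M).factorial : ℝ)) := by
          refine hs1.tsum_le_tsum (fun k => ?_) (hs2.mul_left _)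
          have : (r * u) ^ (k + M) = (2 * r) ^ (k + M) * (u / 2) ^ (k + M) := by
            rw [← mul_pow]; congr 1; ring
          have hp : (2 * r) ^ (k + M) ≤ (2 * r) ^ M :=
            pow_le_pow_of_le_one (by linarith) (by linarith) (by omega)
          rw [this, mul_div_assoc]
          exact mul_le_mul_of_nonneg_right hp (by positivity)
      _ = (2 * r) ^ M * ∑' k : ℕ, ((u / 2) ^ (k + M) / ((k + M).factorial : ℝ)) := tsum_mul_left
      _ ≤ _ := by
          gcongr
          rw [← (hexp (u / 2)).tsum_eq, ← (hexp (u / 2)).summable.sum_add_tsum_nat_add M]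
          have : 0 ≤ ∑ k ∈ Finset.range M, (u / 2) ^ k / (k.factorial : ℝ) :=
            Finset.sum_nonneg fun k _ => by positivity
          linarith
  have e4 : 0 ≤ ∑' k : ℕ, (r * u) ^ (k + M) / ((k + M).factorial : ℝ) :=
    tsum_nonneg fun k => by positivity
  rw [remCoeff, e1, e2, norm_mul, Complex.norm_natCast_cpow_of_pos hn, norm_real,
    Real.norm_of_nonneg e4, Real.rpow_def_of_pos hn', ← hu]
  have : (a - 1).re = -(1 / 2) := by rw [sub_re, ha]; norm_num
  rw [this]
  calc _ ≤ Real.exp (u * -(1 / 2)) * ((2 * r) ^ M * Real.exp (u / 2)) := by gcongr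
    _ = (2 * r) ^ M * (Real.exp (u * -(1 / 2)) * Real.exp (u / 2)) := by ring
    _ = _ := by rw [← Real.exp_add]; ring_nf; simp

lemma abscissa_onPrimes_one : LSeries.abscissaOfAbsConv (onPrimes 1) ≤ 1 :=
  LSeries.abscissaOfAbsConv_le_of_forall_lt_LSeriesSummable fun y hy =>
    lseriesSummable_onPrimes (C := 1) (by simp) (by simpa using hy)

lemma logMul_iterate_apply (f : ℕ → ℂ) (k n : ℕ) :
    (LSeries.logMul^[k] f) n = (log n) ^ k * f n := by
  induction k with
  | zero => simp
  | succ k ih => rw [Function.iterate_succ_apply', LSeries.logMul, ih, pow_succ]; ring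

/-- Differentiating the prime zeta function `k` times multiplies its coefficients by `(-log p)^k`, so
its Taylor remainders are themselves Dirichlet series over the primes. -/
lemma taylorRem_primeZeta {a : ℂ} (ha : a.re = 1 / 2) {r : ℝ} (hr : r < 1 / 2)
    (M : ℕ) {s : ℂ} (hs : 1 < s.re) :
    taylorRem M r (LSeries (onPrimes 1)) (s + 1 - a) = LSeries (onPrimes (remCoeff a r M)) s := by
  set w := s + 1 - a with hw
  have hwre : w.re = s.re + 1 / 2 := by rw [hw, sub_re, add_re, ha, one_re]; ring
  have hw1 : LSeries.abscissaOfAbsConv (onPrimes 1) < w.re :=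
    abscissa_onPrimes_one.trans_lt (by
      have : (1 : ℝ) < w.re := by rw [hwre]; linarith
      exact_mod_cast this)
  have h1 : LSeriesHasSum (onPrimes 1) (w - r) (LSeries (onPrimes 1) (w - r)) :=
    (lseriesSummable_onPrimes (C := 1) (by simp) (by simp [hwre]; linarith)).LSeriesHasSum
  have h2 : ∀ k ∈ Finset.range M, HasSum (fun n => LSeries.term (LSeries.logMul^[k] (onPrimes 1)) w n *
      ((-1) ^ k * (-(r : ℂ)) ^ k / (k.factorial : ℂ)))
      (iteratedDeriv k (LSeries (onPrimes 1)) w * (-(r : ℂ)) ^ k / (k.factorial : ℂ)) := by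
    intro k _
    have h3 : LSeriesHasSum (LSeries.logMul^[k] (onPrimes 1)) w
        (LSeries (LSeries.logMul^[k] (onPrimes 1)) w) :=
      (LSeriesSummable_of_abscissaOfAbsConv_lt_re
        (by rwa [LSeries.absicssaOfAbsConv_logPowMul])).LSeriesHasSum
    have h4 := HasSum.mul_right ((-1) ^ k * (-(r : ℂ)) ^ k / (k.factorial : ℂ)) h3
    rw [LSeries_iteratedDeriv k hw1]
    have e : (-1) ^ k * LSeries (LSeries.logMul^[k] (onPrimes 1)) w * (-(r : ℂ)) ^ k /
        (k.factorial : ℂ) = LSeries (LSeries.logMul^[k] (onPrimes 1)) w *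
          ((-1) ^ k * (-(r : ℂ)) ^ k / (k.factorial : ℂ)) := by ring
    rw [e]
    exact h4
  have h5 := HasSum.sub h1 (hasSum_sum h2)
  change HasSum _ (taylorRem M r (LSeries (onPrimes 1)) w) at h5
  rw [← h5.tsum_eq, LSeries]
  refine tsum_congr fun n => ?_
  by_cases hn0 : n = 0
  · simp [hn0]
  have hn : (n : ℂ) ≠ 0 := by exact_mod_cast hn0
  simp only [LSeries.term_of_ne_zero hn0, logMul_iterate_apply, onPrimes]
  split_ifs with hp
  · simp only [Pi.one_apply, remCoeff]
    have e1 : (n : ℂ) ^ (w - r) = (n : ℂ) ^ w / (n : ℂ) ^ (r : ℂ) := cpow_sub _ _ hn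
    have e2 : (n : ℂ) ^ w = (n : ℂ) ^ s / (n : ℂ) ^ (a - 1) := by
      rw [← cpow_sub _ _ hn]; congr 1; rw [hw]; ring
    have e3 : ∀ k, (-1 : ℂ) ^ k * (-(r : ℂ)) ^ k = (r : ℂ) ^ k := by
      intro k; rw [← mul_pow]; simp
    have hs0 : (n : ℂ) ^ s ≠ 0 := by simp [cpow_eq_zero_iff, hn]
    have ha0 : (n : ℂ) ^ (a - 1) ≠ 0 := by simp [cpow_eq_zero_iff, hn]
    have hr0 : (n : ℂ) ^ (r : ℂ) ≠ 0 := by simp [cpow_eq_zero_iff, hn]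
    rw [e1, e2, mul_sub, sub_div, Finset.mul_sum, Finset.sum_div]
    congr 1
    · field_simp
    · refine Finset.sum_congr rfl fun k _ => ?_
      rw [e3, mul_pow]
      have hf : (k.factorial : ℂ) ≠ 0 := by exact_mod_cast k.factorial_ne_zero
      field_simp
  · simp

/-! ### The factor attached to a single point -/

lemma lseries_onPrimes_natCast_mul (m : ℕ) (c : ℕ → ℂ) (s : ℂ) :
    LSeries (onPrimes fun n => m * c n) s = m * LSeries (onPrimes c) s := by
  have : (onPrimes fun n => m * c n) = (m : ℂ) • onPrimes c := by
    funext n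
    simp [onPrimes]
  rw [this, LSeries_smul]

lemma taylorRem_sub_log {V : ℂ → ℂ} (hV : DifferentiableOn ℂ V {s : ℂ | 1 / 2 < s.re})
    (hVP : ∀ w : ℂ, 1 < w.re → LSeries (onPrimes 1) w = V w - log (w - 1))
    {r : ℝ} (M : ℕ) {w : ℂ} (hw : 1 < w.re) (hwr : 1 < (w - r).re) :
    taylorRem M r (LSeries (onPrimes 1)) w =
      taylorRem M r V w - taylorRem M r (fun w => log (w - 1)) w := by
  have hUo : IsOpen {s : ℂ | 1 / 2 < s.re} := isOpen_lt continuous_const Complex.continuous_re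
  have hev : LSeries (onPrimes 1) =ᶠ[nhds w] fun w => V w - log (w - 1) := by
    filter_upwards [(isOpen_lt continuous_const Complex.continuous_re).mem_nhds hw] with z hz
    exact hVP z hz
  have hA : AnalyticAt ℂ V w := hV.analyticAt (hUo.mem_nhds (by
    change 1 / 2 < w.re; linarith))
  have hL : AnalyticAt ℂ (fun w : ℂ => log (w - 1)) w :=
    AnalyticAt.clog (by fun_prop) (Or.inl (by simpa using hw))
  have hk : ∀ k, iteratedDeriv k (LSeries (onPrimes 1)) w =
      iteratedDeriv k V w - iteratedDeriv k (fun w : ℂ => log (w - 1)) w := by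
    intro k
    rw [hev.iteratedDeriv_eq k, iteratedDeriv_fun_sub hA.contDiffAt hL.contDiffAt]
  unfold taylorRem
  simp only [hk, hVP _ hwr, sub_mul, sub_div, Finset.sum_sub_distrib]
  ring

/-- A holomorphic function on `1/2 < Re s` with a single zero, at a prescribed point `ρ` of the
strip, which is the reciprocal of the exponential of a Dirichlet series over the primes with small
coefficients, and which is close to `1` on a given compact set `K` whose points are farther from
`1/2 + i Im ρ` than twice the distance of `ρ` to the critical line. -/
lemma exists_pointFactor {V : ℂ → ℂ} (hV : DifferentiableOn ℂ V {s : ℂ | 1 / 2 < s.re})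
    (hVP : ∀ w : ℂ, 1 < w.re → LSeries (onPrimes 1) w = V w - log (w - 1))
    {ρ : ℂ} (hρ1 : 1 / 2 < ρ.re) (hρ2 : ρ.re < 1) {m : ℕ} (hm : 1 ≤ m)
    {K : Set ℂ} (hK : IsCompact K) (hKU : ∀ s ∈ K, 1 / 2 < s.re)
    (hKz : ∀ s ∈ K, 2 * (ρ.re - 1 / 2) ≤ ‖s - (1 / 2 + ρ.im * I)‖) {ε : ℝ} (hε : 0 < ε) :
    ∃ (h : ℕ → ℂ) (G : ℂ → ℂ), (∀ n, n.Prime → ‖h n‖ ≤ ε) ∧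
      DifferentiableOn ℂ G {s : ℂ | 1 / 2 < s.re} ∧ ZeroOfOrder G ρ m ∧
      (∀ s : ℂ, 1 / 2 < s.re → s ≠ ρ → G s ≠ 0) ∧ (∀ s ∈ K, ‖G s - 1‖ ≤ ε) ∧
      ∀ s : ℂ, 1 < s.re → G s * exp (LSeries (onPrimes h) s) = 1 := by
  have hUo : IsOpen {s : ℂ | 1 / 2 < s.re} := isOpen_lt continuous_const Complex.continuous_re
  set a : ℂ := 1 / 2 + ρ.im * I with ha
  set r : ℝ := ρ.re - 1 / 2 with hr
  have hare : a.re = 1 / 2 := by simp [ha]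
  have hr0 : 0 < r := by linarith
  have hr1 : r < 1 / 2 := by linarith
  have hρa : ρ = a + r := by
    apply Complex.ext <;> simp [ha, hr]
  have hm0 : (0 : ℝ) < m := by exact_mod_cast hm
  set η : ℝ := min 1 ε / (4 * m) with hη
  have hη0 : 0 < η := by positivity
  -- the truncation order `M + 1` is chosen so that all three error terms are small
  have ev1 : ∀ᶠ M in atTop, ∀ w ∈ (fun s => s + 1 - a) '' K, ‖taylorRem (M + 1) r V w‖ ≤ η :=
    (tendsto_add_atTop_nat 1).eventually
      (eventually_norm_taylorRem_le hV hr0 hr1 (hK.image (by fun_prop)) (by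
        rintro _ ⟨s, hs, rfl⟩
        have := hKU s hs
        simp only [sub_re, add_re, one_re, hare]
        linarith) hη0)
  have ev2 : ∀ᶠ M : ℕ in atTop, (m : ℝ) * (2 * r) ^ (M + 1) ≤ ε := by
    have := ((tendsto_pow_atTop_nhds_zero_of_lt_one (r := 2 * r) (by linarith)
      (by linarith)).const_mul (m : ℝ)).comp (tendsto_add_atTop_nat 1)
    rw [mul_zero] at this
    filter_upwards [this.eventually (gt_mem_nhds hε)] with M hM using hM.le
  have ev3 : ∀ᶠ M : ℕ in atTop, (1 / 2 : ℝ) ^ M ≤ η := by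
    filter_upwards [(tendsto_pow_atTop_nhds_zero_of_lt_one (r := (1 / 2 : ℝ)) (by norm_num)
      (by norm_num)).eventually (gt_mem_nhds hη0)] with M hM using hM.le
  obtain ⟨M, hM1, hM2, hM3⟩ := (ev1.and (ev2.and ev3)).exists
  let L : ℂ → ℂ := fun s => logTaylor (M + 1) (-((r : ℂ) / (s - a)))
  let T : ℂ → ℂ := fun s => taylorRem (M + 1) r V (s + 1 - a)
  let g : ℂ → ℂ := fun s => exp (-T s) * (s - a)⁻¹ * exp (-L s)
  have hsa : ∀ s : ℂ, 1 / 2 < s.re → s - a ≠ 0 := by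
    intro s hs h0
    have := congrArg re h0
    rw [sub_re, hare, zero_re] at this
    linarith
  have hg0 : ∀ s : ℂ, 1 / 2 < s.re → g s ≠ 0 := fun s hs =>
    mul_ne_zero (mul_ne_zero (exp_ne_zero _) (inv_ne_zero (hsa s hs))) (exp_ne_zero _)
  have hgd : DifferentiableOn ℂ g {s : ℂ | 1 / 2 < s.re} := by
    intro s hs
    have hT : DifferentiableAt ℂ T s := by
      have h1 : DifferentiableAt ℂ (taylorRem (M + 1) r V) (s + 1 - a) :=
        differentiableAt_taylorRem hV hr1 _ (by
          have : 1 / 2 < s.re := hs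
          simp only [sub_re, add_re, one_re, hare]; linarith)
      exact h1.comp s (f := fun s => s + 1 - a) (by fun_prop)
    have hi : DifferentiableAt ℂ (fun s => (s - a)⁻¹) s :=
      DifferentiableAt.inv (by fun_prop) (hsa s hs)
    have hL : DifferentiableAt ℂ L s := by
      have h1 : DifferentiableAt ℂ (logTaylor (M + 1)) (-((r : ℂ) / (s - a))) :=
        (hasDerivAt_logTaylor M _).differentiableAt
      refine h1.comp s (f := fun s => -((r : ℂ) / (s - a))) ?_
      have h2 : DifferentiableAt ℂ (fun s => s - a) s := by fun_prop
      exact ((differentiableAt_const (r : ℂ)).div h2 (hsa s hs)).neg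
    exact ((hT.neg.cexp.mul hi).mul hL.neg.cexp).differentiableWithinAt
  refine ⟨fun n => m * remCoeff a r (M + 1) n, fun s => ((s - ρ) * g s) ^ m, ?_, ?_, ?_, ?_, ?_, ?_⟩
  · intro n hn
    rw [norm_mul, Complex.norm_natCast]
    exact (mul_le_mul_of_nonneg_left (norm_remCoeff_le hare hr0 hr1 _ hn.pos) hm0.le).trans hM2
  · exact (DifferentiableOn.mul (by fun_prop) hgd).pow m
  · refine ⟨fun s => g s ^ m, ?_, pow_ne_zero _ (hg0 ρ hρ1), ?_⟩
    · exact ((hgd.pow m).analyticAt (hUo.mem_nhds hρ1))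
    · exact Eventually.of_forall fun z => mul_pow _ _ _
  · intro s hs hne
    exact pow_ne_zero _ (mul_ne_zero (sub_ne_zero.2 hne) (hg0 s hs))
  · intro s hs
    have hs0 := hsa s (hKU s hs)
    have hz : ‖-((r : ℂ) / (s - a))‖ ≤ 1 / 2 := by
      rw [norm_neg, norm_div, norm_real, Real.norm_of_nonneg hr0.le,
        div_le_iff₀ (norm_pos_iff.2 hs0)]
      have := hKz s hs
      linarith
    set z : ℂ := -((r : ℂ) / (s - a)) with hzdef
    have hz1 : 1 + z ≠ 0 := by
      intro h0
      have : z = -1 := by linear_combination h0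
      rw [this] at hz
      norm_num at hz
    have e1 : (s - ρ) * (s - a)⁻¹ = exp (log (1 + z)) := by
      rw [exp_log hz1, hzdef, hρa]
      field_simp
      ring
    have e2 : ((s - ρ) * g s) ^ m = exp (m * (-T s + (log (1 + z) - L s))) := by
      rw [exp_nat_mul]
      congr 1
      calc (s - ρ) * g s = exp (-T s) * ((s - ρ) * (s - a)⁻¹) * exp (-L s) := by
            simp only [g]; ring
        _ = _ := by rw [e1, ← exp_add, ← exp_add]; congr 1; ring
    have b1 : ‖T s‖ ≤ η := hM1 _ ⟨s, hs, rfl⟩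
    have b2 : ‖log (1 + z) - L s‖ ≤ η := by
      have := norm_log_sub_logTaylor_le M (z := z) (by linarith)
      refine this.trans (le_trans ?_ hM3)
      have i1 : (1 - ‖z‖)⁻¹ ≤ 2 := by
        rw [inv_le_comm₀ (by linarith) (by norm_num)]; linarith
      have i2 : ‖z‖ ^ (M + 1) ≤ (1 / 2) ^ (M + 1) := by gcongr
      have i0 : 0 ≤ (1 - ‖z‖)⁻¹ := inv_nonneg.2 (by linarith)
      have i3 : ‖z‖ ^ (M + 1) * (1 - ‖z‖)⁻¹ ≤ (1 / 2) ^ (M + 1) * 2 := by gcongr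
      have i4 : (0 : ℝ) ≤ ‖z‖ ^ (M + 1) * (1 - ‖z‖)⁻¹ :=
        mul_nonneg (by positivity) i0
      calc _ ≤ ‖z‖ ^ (M + 1) * (1 - ‖z‖)⁻¹ := div_le_self i4 (by
              have : (0 : ℝ) ≤ M := by positivity
              linarith)
        _ ≤ _ := i3
        _ = _ := by rw [pow_succ]; ring
    have b3 : ‖(m : ℂ) * (-T s + (log (1 + z) - L s))‖ ≤ min 1 ε / 2 := by
      rw [norm_mul, Complex.norm_natCast]
      calc (m : ℝ) * _ ≤ m * (η + η) := by
            gcongr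
            refine (norm_add_le _ _).trans (add_le_add ?_ b2)
            rwa [norm_neg]
        _ = _ := by rw [hη]; field_simp; ring
    change ‖((s - ρ) * g s) ^ m - 1‖ ≤ ε
    rw [e2]
    refine (norm_exp_sub_one_le (b3.trans ?_)).trans ?_
    · have := min_le_left 1 ε; linarith
    · have := min_le_right 1 ε; linarith
  · intro s hs
    have hw : (s + 1 - a).re = s.re + 1 / 2 := by rw [sub_re, add_re, hare, one_re]; ring
    change ((s - ρ) * g s) ^ m * _ = 1
    rw [lseries_onPrimes_natCast_mul, ← taylorRem_primeZeta hare hr1 _ hs,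
      taylorRem_sub_log hV hVP _ (by rw [hw]; linarith)
        (by rw [sub_re, hw, ofReal_re]; linarith),
      taylorRem_log _ (by rw [hw]; linarith), exp_nat_mul, ← mul_pow]
    have e1 : s + 1 - a - 1 = s - a := by ring
    have e2 : s - a - r = s - ρ := by rw [hρa]; ring
    rw [e1, e2]
    have hs0 := hsa s (by linarith)
    have hsρ : s - ρ ≠ 0 := by
      intro h0
      have := congrArg re h0
      rw [sub_re, zero_re] at this
      linarith
    have e3 : exp (taylorRem (M + 1) r V (s + 1 - a) - (log (s - ρ) - log (s - a) - L s)) =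
        exp (T s) * (s - ρ)⁻¹ * (s - a) * exp (L s) := by
      rw [← exp_log hs0, ← exp_log hsρ, ← exp_neg, ← exp_add, ← exp_add, ← exp_add,
        exp_log hs0, exp_log hsρ]
      congr 1
      ring
    have e4 : (s - ρ) * g s * exp (taylorRem (M + 1) r V (s + 1 - a) -
        (log (s - ρ) - log (s - a) - L s)) = 1 := by
      rw [e3]
      simp only [g, exp_neg]
      have := exp_ne_zero (T s)
      have := exp_ne_zero (L s)
      field_simp
    change ((s - ρ) * g s * exp (taylorRem (M + 1) r V (s + 1 - a) -
        (log (s - ρ) - log (s - a) - L s))) ^ m = 1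
    rw [e4, one_pow]

/-! ### The product over all points -/

/-- An infinite product of holomorphic functions whose factors are, locally, eventually within a
summable distance of `1`. -/
lemma infiniteProduct_aux {ι : Type*} {U : Set ℂ} (hU : IsOpen U) {H : ι → ℂ → ℂ} {ε : ι → ℝ}
    (hε : Summable ε) (hd : ∀ j, DifferentiableOn ℂ (H j) U)
    (hloc : ∀ s ∈ U, ∃ N ∈ nhds s, ∀ᶠ j in cofinite, ∀ z ∈ N, ‖H j z - 1‖ ≤ ε j) :
    DifferentiableOn ℂ (fun s => ∏' j, H j s) U ∧ ∀ s ∈ U, Multipliable (fun j => H j s) ∧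
      ((∀ j, H j s ≠ 0) → ∏' j, H j s ≠ 0) := by
  have hH : ∀ j s, H j s = 1 + (H j s - 1) := fun j s => by ring
  constructor
  · intro s hs
    obtain ⟨N, hN, hb⟩ := hloc s hs
    obtain ⟨W, hWsub, hWo, hsW⟩ := mem_nhds_iff.1 (inter_mem hN (hU.mem_nhds hs))
    have hp := Summable.hasProdLocallyUniformlyOn_one_add (f := fun j z => H j z - 1) hWo hε
      (by filter_upwards [hb] with j hj z hz using hj z (hWsub hz).1)
      (fun j => ((hd j).continuousOn.mono fun z hz => (hWsub hz).2).sub continuousOn_const)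
    simp only [← hH] at hp
    have hdW : DifferentiableOn ℂ (fun s => ∏' j, H j s) W := by
      refine TendstoLocallyUniformlyOn.differentiableOn
        (hasProdLocallyUniformlyOn_iff_tendstoLocallyUniformlyOn.1 hp)
        (Eventually.of_forall fun F => ?_) hWo
      exact DifferentiableOn.fun_finsetProd fun j _ => (hd j).mono fun z hz => (hWsub hz).2
    exact (hdW.differentiableAt (hWo.mem_nhds hsW)).differentiableWithinAt
  · intro s hs
    obtain ⟨N, hN, hb⟩ := hloc s hs
    have hsum : Summable fun j => ‖H j s - 1‖ :=
      Summable.of_norm_bounded_eventually hε (by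
        filter_upwards [hb] with j hj
        rw [norm_norm]
        exact hj s (mem_of_mem_nhds hN))
    constructor
    · simpa only [← hH] using multipliable_one_add_of_summable hsum
    · intro h0
      simpa only [← hH] using tprod_one_add_ne_zero_of_summable
        (f := fun j => H j s - 1) (fun j => by rw [← hH]; exact h0 j) hsum

lemma finite_of_no_accPt {S : Set ℂ} (hS : ∀ s ∈ S, 1 / 2 < s.re ∧ s.re < 1)
    (hacc : ∀ z : ℂ, z.re ≠ 1 / 2 → ¬ AccPt z (𝓟 S)) {δ : ℝ} (hδ : 0 < δ) (T : ℝ) :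
    {s | s ∈ S ∧ 1 / 2 + δ ≤ s.re ∧ |s.im| ≤ T}.Finite := by
  by_contra hinf
  obtain ⟨z, hz, hzacc⟩ := Set.Infinite.exists_accPt_of_subset_isCompact
    (K := Icc (1 / 2 + δ) 1 ×ℂ Icc (-T) T) hinf (isCompact_Icc.reProdIm isCompact_Icc) (by
      rintro s ⟨hs, h1, h2⟩
      rw [mem_reProdIm]
      exact ⟨⟨h1, (hS s hs).2.le⟩, abs_le.1 h2⟩)
  rw [mem_reProdIm] at hz
  refine hacc z (by have := hz.1.1; linarith) (hzacc.mono ?_)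
  exact principal_mono.2 fun s hs => hs.1

lemma countable_of_no_accPt {S : Set ℂ} (hS : ∀ s ∈ S, 1 / 2 < s.re ∧ s.re < 1)
    (hacc : ∀ z : ℂ, z.re ≠ 1 / 2 → ¬ AccPt z (𝓟 S)) : S.Countable := by
  have : S ⊆ ⋃ n : ℕ, {s | s ∈ S ∧ 1 / 2 + 1 / ((n : ℝ) + 1) ≤ s.re ∧ |s.im| ≤ n} := by
    intro s hs
    obtain ⟨n, hn⟩ := exists_nat_one_div_lt (sub_pos.2 (hS s hs).1)
    obtain ⟨k, hk⟩ := exists_nat_ge |s.im|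
    refine mem_iUnion.2 ⟨max n k, hs, ?_, ?_⟩
    · have h1 : 1 / (((max n k : ℕ) : ℝ) + 1) ≤ 1 / ((n : ℝ) + 1) := by
        have : (n : ℝ) ≤ (max n k : ℕ) := by exact_mod_cast le_max_left n k
        gcongr
      linarith
    · have : (k : ℝ) ≤ (max n k : ℕ) := by exact_mod_cast le_max_right n k
      linarith
  exact (countable_iUnion fun n =>
    (finite_of_no_accPt hS hacc (by positivity) _).countable).mono this

/-- Summation over `j` of Dirichlet series over the primes with coefficients of size `ε j`. -/
lemma hasSum_lseries_onPrimes {ι : Type*} {h : ι → ℕ → ℂ} {ε : ι → ℝ} (hε : Summable ε)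
    (hε0 : ∀ j, 0 ≤ ε j) (hh : ∀ j n, n.Prime → ‖h j n‖ ≤ ε j) {s : ℂ} (hs : 1 < s.re) :
    HasSum (fun j => LSeries (onPrimes (h j)) s) (LSeries (onPrimes fun n => ∑' j, h j n) s) := by
  have hz : Summable fun n : ℕ => ((n : ℝ) ^ s.re)⁻¹ := Real.summable_nat_rpow_inv.2 hs
  have hsum : Summable (Function.uncurry fun j n => LSeries.term (onPrimes (h j)) s n) := by
    refine Summable.of_norm_bounded
      (hε.mul_of_nonneg hz (fun j => hε0 j) (fun n => by positivity)) ?_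
    rintro ⟨j, n⟩
    simp only [Function.uncurry]
    rw [LSeries.norm_term_eq]
    split_ifs with hn
    · exact mul_nonneg (hε0 j) (by positivity)
    · rw [div_eq_mul_inv]
      exact mul_le_mul_of_nonneg_right (norm_onPrimes_le (hε0 j) (hh j) n) (by positivity)
  have e : LSeries (onPrimes fun n => ∑' j, h j n) s = ∑' j, LSeries (onPrimes (h j)) s := by
    simp only [LSeries]
    rw [← hsum.tsum_comm]
    refine tsum_congr fun n => ?_
    rcases eq_or_ne n 0 with rfl | hn
    · simp
    · simp only [LSeries.term_of_ne_zero hn, onPrimes]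
      split_ifs
      · rw [tsum_div_const]
      · simp
  rw [e]
  exact (hsum.prod).hasSum

/-- Under the Riemann Hypothesis (encoded in the continuation `V`), any multiset in the strip which
accumulates only on the critical line is the zero multiset of a holomorphic function that is the
reciprocal of the exponential of a Dirichlet series over the primes with coefficients at most
`1/16`. -/
lemma exists_zeroFunction {V : ℂ → ℂ} (hV : DifferentiableOn ℂ V {s : ℂ | 1 / 2 < s.re})
    (hVP : ∀ w : ℂ, 1 < w.re → LSeries (onPrimes 1) w = V w - log (w - 1))
    {S : Set ℂ} {m : ℂ → ℕ} (hS : ∀ s ∈ S, 1 / 2 < s.re ∧ s.re < 1) (hm : ∀ s ∈ S, 1 ≤ m s)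
    (hacc : ∀ z : ℂ, z.re ≠ 1 / 2 → ¬ AccPt z (𝓟 S)) :
    ∃ (f : ℕ → ℂ) (G : ℂ → ℂ), (∀ n, n.Prime → ‖f n‖ ≤ 1 / 16) ∧
      DifferentiableOn ℂ G {s : ℂ | 1 / 2 < s.re} ∧
      (∀ s : ℂ, 1 / 2 < s.re → (G s = 0 ↔ s ∈ S)) ∧ (∀ s ∈ S, ZeroOfOrder G s (m s)) ∧
      ∀ s : ℂ, 1 < s.re → G s * exp (LSeries (onPrimes f) s) = 1 := by
  classical
  have hUo : IsOpen {s : ℂ | 1 / 2 < s.re} := isOpen_lt continuous_const Complex.continuous_re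
  have : Countable S := (countable_of_no_accPt hS hacc).to_subtype
  obtain ⟨e, he⟩ := Countable.exists_injective_nat S
  let K : S → Set ℂ := fun j => {s : ℂ | 1 / 2 + 1 / ((e j : ℝ) + 2) ≤ s.re ∧ ‖s‖ ≤ e j ∧
    2 * ((j : ℂ).re - 1 / 2) ≤ ‖s - (1 / 2 + (j : ℂ).im * I)‖}
  have hKc : ∀ j, IsCompact (K j) := by
    intro j
    refine (isCompact_closedBall (0 : ℂ) (e j)).of_isClosed_subset ?_ ?_
    · have h1 : IsClosed {s : ℂ | 2 * ((j : ℂ).re - 1 / 2) ≤ ‖s - (1 / 2 + (j : ℂ).im * I)‖} :=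
        isClosed_le continuous_const (by fun_prop)
      exact (isClosed_le continuous_const Complex.continuous_re).inter
        ((isClosed_le continuous_norm continuous_const).inter h1)
    · intro s hs
      simpa using hs.2.1
  let ε : S → ℝ := fun j => (1 / 2) ^ e j / 32
  have hε0 : ∀ j, 0 < ε j := fun j => by positivity
  have hgeo : Summable fun n : ℕ => (1 / 2 : ℝ) ^ n / 32 := summable_geometric_two.div_const 32
  have hε : Summable ε := hgeo.comp_injective he
  have hεsum : ∑' j, ε j ≤ 1 / 16 := by
    refine (tsum_comp_le_tsum_of_inj hgeo (fun n => by positivity) he).trans ?_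
    rw [tsum_div_const, tsum_geometric_two]
    norm_num
  have hex := fun j : S => exists_pointFactor hV hVP (hS j j.2).1 (hS j j.2).2 (hm j j.2) (hKc j)
    (fun s hs => by
      have : (0 : ℝ) < 1 / ((e j : ℝ) + 2) := by positivity
      have := hs.1
      linarith) (fun s hs => hs.2.2) (hε0 j)
  choose h H hh hHd hH0 hHne hHK hHexp using hex
  -- every point of the half-plane has a neighbourhood contained in all but finitely many `K j`
  have hnhd : ∀ s : ℂ, 1 / 2 < s.re → ∃ N ∈ nhds s, ∀ᶠ j in cofinite, N ⊆ K j := by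
    intro s hs
    set δ : ℝ := (s.re - 1 / 2) / 2 with hδ
    have hδ0 : 0 < δ := by linarith
    refine ⟨Metric.ball s (min δ 1), Metric.ball_mem_nhds _ (by positivity), ?_⟩
    have htend : Tendsto e cofinite atTop := by
      rw [← Nat.cofinite_eq_atTop]; exact he.tendsto_cofinite
    obtain ⟨n1, hn1⟩ := exists_nat_ge (‖s‖ + 1)
    obtain ⟨n2, hn2⟩ := exists_nat_one_div_lt hδ0
    have hfin := (finite_of_no_accPt hS hacc (half_pos hδ0) (‖s‖ + 2)).preimage
      (f := ((↑) : S → ℂ)) Subtype.val_injective.injOn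
    filter_upwards [htend.eventually_ge_atTop n1, htend.eventually_ge_atTop n2,
      hfin.compl_mem_cofinite] with j hj1 hj2 hj3 z hz
    have hz1 : ‖z - s‖ < min δ 1 := by simpa [dist_eq_norm] using hz
    have hzδ := hz1.trans_le (min_le_left _ _)
    have hzo := hz1.trans_le (min_le_right _ _)
    have hzre := (abs_le.1 (Complex.abs_re_le_norm (z - s))).1
    rw [sub_re] at hzre
    have hre : 1 / 2 + δ ≤ z.re := by linarith
    have hzn : ‖z‖ ≤ ‖s‖ + 1 := by
      have := norm_le_norm_add_norm_sub' z s
      linarith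
    have hj1' : (n1 : ℝ) ≤ e j := by exact_mod_cast hj1
    have hj2' : (n2 : ℝ) ≤ e j := by exact_mod_cast hj2
    refine ⟨?_, by linarith, ?_⟩
    · have : 1 / ((e j : ℝ) + 2) ≤ 1 / ((n2 : ℝ) + 1) := by
        apply one_div_le_one_div_of_le <;> [positivity; linarith]
      linarith
    · by_cases hr : (j : ℂ).re - 1 / 2 ≤ δ / 2
      · have h1 := Complex.re_le_norm (z - (1 / 2 + (j : ℂ).im * I))
        simp at h1
        norm_num at h1 ⊢
        linarith
      · have him : ‖s‖ + 2 < |(j : ℂ).im| := by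
          by_contra hcon
          exact hj3 ⟨j.2, by linarith, by linarith⟩
        have h1 := Complex.abs_im_le_norm (z - (1 / 2 + (j : ℂ).im * I))
        have h2 : (z - (1 / 2 + (j : ℂ).im * I)).im = z.im - (j : ℂ).im := by simp
        rw [h2] at h1
        have h3 := Complex.abs_im_le_norm z
        have h4 := abs_sub_abs_le_abs_sub (j : ℂ).im z.im
        rw [abs_sub_comm] at h4
        have := (hS j j.2).2
        linarith
  have hloc : ∀ s ∈ {s : ℂ | 1 / 2 < s.re}, ∃ N ∈ nhds s, ∀ᶠ j in cofinite,
      ∀ z ∈ N, ‖H j z - 1‖ ≤ ε j := by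
    intro s hs
    obtain ⟨N, hN, hb⟩ := hnhd s hs
    refine ⟨N, hN, ?_⟩
    filter_upwards [hb] with j hj z hz using hHK j z (hj hz)
  obtain ⟨hdiff, hprod⟩ := infiniteProduct_aux hUo hε hHd hloc
  -- splitting off the factor with index `i`
  have hsplit : ∀ i : S, ∃ g : ℂ → ℂ, DifferentiableOn ℂ g {s : ℂ | 1 / 2 < s.re} ∧ g i ≠ 0 ∧
      ∀ s : ℂ, 1 / 2 < s.re → ∏' j, H j s = H i s * g s := by
    intro i
    let B : S → ℂ → ℂ := fun j s => if j = i then 1 else H j s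
    obtain ⟨hBd, hBp⟩ := infiniteProduct_aux (H := B) hUo hε
      (fun j => by
        by_cases hj : j = i
        · simp [B, hj]
        · simpa [B, hj] using hHd j)
      (fun s hs => by
        obtain ⟨N, hN, hb⟩ := hloc s hs
        refine ⟨N, hN, ?_⟩
        filter_upwards [hb] with j hj z hz
        by_cases hji : j = i
        · simpa [B, hji] using (hε0 i).le
        · simpa [B, hji] using hj z hz)
    refine ⟨fun s => ∏' j, B j s, hBd, (hBp i (hS i i.2).1).2 fun j => ?_, fun s hs => ?_⟩
    · by_cases hj : j = i
      · simp [B, hj]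
      · simp only [B, if_neg hj]
        exact hHne j i (hS i i.2).1 fun h => hj (Subtype.ext h.symm)
    · have hA : HasProd (fun j => if j = i then H i s else 1) (H i s) := hasProd_ite_eq i (H i s)
      have hAB := hA.multipliable.tprod_mul (hBp s hs).1
      rw [hA.tprod_eq] at hAB
      rw [← hAB]
      refine tprod_congr fun j => ?_
      by_cases hj : j = i
      · subst hj; simp [B]
      · simp [B, hj]
  have hzero : ∀ i : S, ZeroOfOrder (fun s => ∏' j, H j s) i (m i) := by
    intro i
    obtain ⟨g, hgd, hg0, hg⟩ := hsplit i
    obtain ⟨k, hk, hk0, hkev⟩ := hH0 i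
    have hmem := hUo.mem_nhds (hS i i.2).1
    refine ⟨fun s => k s * g s, hk.mul (hgd.analyticAt hmem), mul_ne_zero hk0 hg0, ?_⟩
    filter_upwards [hkev, hmem] with z hz1 hz2
    rw [hg z hz2, hz1, mul_assoc]
  refine ⟨fun n => ∑' j, h j n, fun s => ∏' j, H j s, ?_, hdiff, ?_, fun s hs => hzero ⟨s, hs⟩, ?_⟩
  · intro n hn
    exact (tsum_of_norm_bounded hε.hasSum fun j => hh j n hn).trans hεsum
  · intro s hs
    constructor
    · intro h0
      by_contra hsS
      exact (hprod s hs).2 (fun j => hHne j s hs fun h => hsS (h ▸ j.2)) h0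
    · intro hsS
      obtain ⟨g, -, -, hev⟩ := hzero ⟨s, hsS⟩
      have := hev.self_of_nhds
      have hms := hm s hsS
      simpa [show m s ≠ 0 by omega] using this
  · intro s hs
    have h1 := (hasSum_lseries_onPrimes hε (fun j => (hε0 j).le) hh hs).cexp
    rw [← h1.tprod_eq, ← (hprod s (by change 1 / 2 < s.re; linarith)).1.tprod_mul h1.multipliable]
    simp [hHexp _ s hs]

/-! ### Greedy choice of cube roots of unity -/

/-- Among the three cube roots of unity one points away from any given complex number. -/
lemma exists_cubeRoot_opposite (E : ℂ) : ∃ c : ℂ, c ^ 3 = 1 ∧ ‖c‖ = 1 ∧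
    c.re * E.re + c.im * E.im ≤ -‖E‖ / 4 := by
  have h3 : √3 ^ 2 = 3 := Real.sq_sqrt (by norm_num)
  have h17 : 1.7 ≤ √3 := Real.le_sqrt_of_sq_le (by norm_num)
  have hN := Complex.norm_le_abs_re_add_abs_im E
  have hnorm : ∀ c : ℂ, c ^ 3 = 1 → ‖c‖ = 1 := fun c hc =>
    Complex.norm_eq_one_of_pow_eq_one hc (by norm_num)
  have key : ∀ t : ℝ, t ^ 2 = 3 → (⟨-1 / 2, t / 2⟩ : ℂ) ^ 3 = 1 := by
    intro t ht
    have hm : (⟨-1 / 2, t / 2⟩ : ℂ) ^ 3 = ⟨-1 / 2, t / 2⟩ * ⟨-1 / 2, t / 2⟩ * ⟨-1 / 2, t / 2⟩ := by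
      ring
    rw [hm]
    apply Complex.ext
    · simp only [mul_re, mul_im, one_re]
      nlinarith
    · simp only [mul_re, mul_im, one_im]
      linear_combination (-t / 8) * ht
  by_cases hx : E.re ≤ -‖E‖ / 4
  · exact ⟨1, by simp, by simp, by simpa using hx⟩
  push Not at hx
  have hy0 := abs_nonneg E.im
  have hmain : -(E.re / 2) - √3 / 2 * |E.im| ≤ -‖E‖ / 4 := by
    have h1 : 1.7 * |E.im| ≤ √3 * |E.im| := mul_le_mul_of_nonneg_right h17 hy0
    rcases abs_cases E.re with ⟨h, _⟩ | ⟨h, _⟩ <;> rw [h] at hN <;> nlinarith [norm_nonneg E]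
  rcases abs_cases E.im with ⟨h, _⟩ | ⟨h, _⟩
  · have hc := key (-√3) (by rw [neg_sq, h3])
    refine ⟨_, hc, hnorm _ hc, ?_⟩
    rw [h] at hmain
    simp only
    linarith
  · have hc := key √3 h3
    refine ⟨_, hc, hnorm _ hc, ?_⟩
    rw [h] at hmain
    simp only
    linarith

/-- With `c` opposite to `E`, `‖E + c‖² ≤ ‖E‖² - ‖E‖/2 + 1`, which is at most `(8 - 1/8)²` whenever
`‖E‖ ≤ 8`. -/
lemma norm_greedy_step {E c f : ℂ} (hE : ‖E‖ ≤ 8) (hc : ‖c‖ = 1)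
    (hcE : c.re * E.re + c.im * E.im ≤ -‖E‖ / 4) (hf : ‖f‖ ≤ 1 / 8) : ‖E + (c - f)‖ ≤ 8 := by
  have h1 : ‖E + c‖ ^ 2 = ‖E‖ ^ 2 + ‖c‖ ^ 2 + 2 * (c.re * E.re + c.im * E.im) := by
    simp only [Complex.sq_norm, normSq_apply, add_re, add_im]
    ring
  have h2 : ‖E + c‖ ≤ 63 / 8 := by
    refine abs_le_of_sq_le_sq' ?_ (by norm_num) |>.2
    rw [h1, hc]
    nlinarith [norm_nonneg E]
  calc ‖E + (c - f)‖ = ‖(E + c) - f‖ := by ring_nf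
    _ ≤ ‖E + c‖ + ‖f‖ := norm_sub_le _ _
    _ ≤ 8 := by linarith

/-- Greedy choice: cube roots of unity can be assigned to the primes so that their partial sums stay
within a bounded distance of those of any given small coefficients. -/
lemma exists_greedy {f : ℕ → ℂ} (hf : ∀ n, n.Prime → ‖f n‖ ≤ 1 / 8) :
    ∃ c : ℕ → ℂ, (∀ n, c n ^ 3 = 1) ∧
      ∀ n, ‖∑ k ∈ Finset.range n, onPrimes (fun k => c k - f k) k‖ ≤ 8 := by
  choose ch hch3 hch1 hch using exists_cubeRoot_opposite
  let E : ℕ → ℂ := fun n => Nat.rec 0 (fun n e => e + if n.Prime then ch e - f n else 0) n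
  have hE : ∀ n, E (n + 1) = E n + if n.Prime then ch (E n) - f n else 0 := fun n => rfl
  refine ⟨fun n => ch (E n), fun n => hch3 _, ?_⟩
  have hsum : ∀ n, ∑ k ∈ Finset.range n, onPrimes (fun k => ch (E k) - f k) k = E n := by
    intro n
    induction n with
    | zero => simp [E]
    | succ n ih => rw [Finset.sum_range_succ, ih, hE, onPrimes]
  intro n
  rw [hsum]
  induction n with
  | zero => simp [E]
  | succ n ih =>
    rw [hE]
    split_ifs with hn
    · exact norm_greedy_step ih (hch1 _) (hch _) (hf n hn)
    · simpa using ih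

/-- A Dirichlet series with bounded partial sums of coefficients continues to `0 < Re s`: it is
`s` times a Mellin transform. -/
lemma exists_lseries_continuation {c : ℕ → ℂ} {B : ℝ}
    (hB : ∀ n, ‖∑ k ∈ Finset.Icc 1 n, c k‖ ≤ B) :
    ∃ D : ℂ → ℂ, DifferentiableOn ℂ D {s : ℂ | 0 < s.re} ∧
      ∀ s : ℂ, 0 < s.re → LSeriesSummable c s → LSeries c s = D s := by
  let A : ℝ → ℂ := fun t => ∑ k ∈ Finset.Icc 1 ⌊t⌋₊, c k
  have hAm : Measurable A :=
    (measurable_from_nat (f := fun n => ∑ k ∈ Finset.Icc 1 n, c k)).comp Nat.measurable_floor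
  have hA0 : ∀ t < 1, A t = 0 := by
    intro t ht
    simp [A, Nat.floor_eq_zero.2 ht]
  refine ⟨fun s => s * mellin A (-s), ?_, ?_⟩
  · intro s hs
    have hs' : 0 < s.re := hs
    have hloc : MeasureTheory.LocallyIntegrable A MeasureTheory.volume :=
      (MeasureTheory.memLp_top_of_bound hAm.aestronglyMeasurable B
        (Eventually.of_forall fun t => hB _)).locallyIntegrable le_top
    have hd : DifferentiableAt ℂ (mellin A) (-s) := by
      refine mellin_differentiableAt_of_isBigO_rpow (a := 0) (b := (-s).re - 1)
        (hloc.locallyIntegrableOn _) ?_ (by simpa using hs') ?_ (by linarith)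
      · refine Asymptotics.IsBigO.of_bound B (Eventually.of_forall fun t => ?_)
        simpa using hB _
      · refine Asymptotics.IsBigO.of_bound 0 ?_
        filter_upwards [nhdsWithin_le_nhds (Iio_mem_nhds (zero_lt_one))] with t ht
        simp [hA0 t ht]
    have hd2 : DifferentiableAt ℂ (fun s => mellin A (-s)) s :=
      hd.comp s (f := fun s => -s) (by fun_prop)
    exact (differentiableAt_id.mul hd2).differentiableWithinAt
  · intro s hs hsum
    have hO : (fun n => ∑ k ∈ Finset.Icc 1 n, c k) =O[atTop] fun n : ℕ => (n : ℝ) ^ (0 : ℝ) := by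
      refine Asymptotics.IsBigO.of_bound B (Eventually.of_forall fun n => ?_)
      simpa using hB n
    rw [LSeries_eq_mul_integral c le_rfl hs hsum hO]
    congr 1
    rw [mellin, ← MeasureTheory.integral_indicator measurableSet_Ioi,
      ← MeasureTheory.integral_indicator measurableSet_Ioi]
    refine MeasureTheory.integral_congr_ae ?_
    filter_upwards [MeasureTheory.Measure.ae_ne MeasureTheory.volume (1 : ℝ)] with t ht
    rw [show -(s + 1) = -s - 1 by ring]
    rcases lt_or_gt_of_ne ht with h | h
    · rw [indicator_of_notMem (by simpa using h.le)]
      have := hA0 t h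
      by_cases h0 : t ∈ Ioi (0 : ℝ)
      · rw [indicator_of_mem h0, this, smul_zero]
      · rw [indicator_of_notMem h0]
    · rw [indicator_of_mem (by exact h), indicator_of_mem (by exact zero_lt_one.trans h),
        smul_eq_mul, mul_comm]

lemma exists_lseries_onPrimes_continuation {c : ℕ → ℂ} {B : ℝ}
    (hB : ∀ n, ‖∑ k ∈ Finset.range n, onPrimes c k‖ ≤ B) :
    ∃ D : ℂ → ℂ, DifferentiableOn ℂ D {s : ℂ | 0 < s.re} ∧
      ∀ s : ℂ, 0 < s.re → LSeriesSummable (onPrimes c) s → LSeries (onPrimes c) s = D s := by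
  refine exists_lseries_continuation (B := B) fun n => ?_
  have : ∑ k ∈ Finset.Icc 1 n, onPrimes c k = ∑ k ∈ Finset.range (n + 1), onPrimes c k := by
    refine Finset.sum_subset (fun k hk => ?_) (fun k hk hk' => ?_)
    · simp at hk ⊢; omega
    · have : k = 0 := by simp at hk hk'; omega
      simp [this, onPrimes, Nat.not_prime_zero]
  rw [this]
  exact hB _

/-! ### Completely multiplicative extension and assembly -/

/-- The completely multiplicative function with prescribed values at the primes, and value `0`
at `0`. -/
noncomputable def multExt (c : ℕ → ℂ) : ℕ →*₀ ℂ where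
  toFun n := if n = 0 then 0 else n.factorization.prod fun p k => c p ^ k
  map_zero' := by simp
  map_one' := by simp
  map_mul' m n := by
    rcases eq_or_ne m 0 with rfl | hm
    · simp
    rcases eq_or_ne n 0 with rfl | hn
    · simp
    rw [if_neg (mul_ne_zero hm hn), if_neg hm, if_neg hn, Nat.factorization_mul hm hn]
    exact Finsupp.prod_add_index' (fun p => pow_zero _) (fun p k l => pow_add _ _ _)

lemma multExt_prime (c : ℕ → ℂ) {p : ℕ} (hp : p.Prime) : multExt c p = c p := by
  change (if p = 0 then 0 else p.factorization.prod fun p k => c p ^ k) = c p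
  rw [if_neg hp.ne_zero, hp.factorization]
  simp

lemma multExt_pow_three {c : ℕ → ℂ} (hc : ∀ n, c n ^ 3 = 1) {n : ℕ} (hn : n ≠ 0) :
    multExt c n ^ 3 = 1 := by
  change (if n = 0 then 0 else n.factorization.prod fun p k => c p ^ k) ^ 3 = 1
  rw [if_neg hn, Finsupp.prod, ← Finset.prod_pow]
  refine Finset.prod_eq_one fun p _ => ?_
  rw [← pow_mul, mul_comm, pow_mul, hc, one_pow]

lemma mem_of_pow_three_eq_one {z : ℂ} (hz : z ^ 3 = 1) :
    z ∈ ({1, Complex.exp (2 * Real.pi * Complex.I / 3),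
      Complex.exp (-(2 * Real.pi * Complex.I) / 3)} : Set ℂ) := by
  have hprim := Complex.isPrimitiveRoot_exp 3 (by norm_num)
  obtain ⟨i, hi, rfl⟩ := hprim.eq_pow_of_pow_eq_one hz
  simp only [mem_insert_iff, mem_singleton_iff]
  interval_cases i
  · simp
  · simp
  · right; right
    rw [← Complex.exp_nat_mul, Complex.exp_eq_exp_iff_exists_int]
    exact ⟨1, by push_cast; ring⟩

lemma helsonZeta_eq_tsum (χ : ℕ →*₀ ℂ) (s : ℂ) :
    helsonZeta χ s = ∑' n : ℕ, χ n * (n : ℂ) ^ (-s) := by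
  rw [helsonZeta, ← Function.Injective.tsum_eq (f := fun n : ℕ => χ n * (n : ℂ) ^ (-s))
    Nat.succ_injective]
  · simp
  · intro n hn
    rcases n with _ | n
    · simp at hn
    · exact ⟨n, rfl⟩

theorem helson_zeta_prescribed_zeros_poles_cubic_RH
    (hRH : RiemannHypothesis)
    (SZ SP : Set ℂ) (mZ mP : ℂ → ℕ)
    (hZstrip : ∀ s ∈ SZ, 1 / 2 < s.re ∧ s.re < 1)
    (hPstrip : ∀ s ∈ SP, 1 / 2 < s.re ∧ s.re < 1)
    (hmZ : ∀ s ∈ SZ, 1 ≤ mZ s) (hmP : ∀ s ∈ SP, 1 ≤ mP s)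
    (hdisj : Disjoint SZ SP)
    (hacc : ∀ z : ℂ, z.re ≠ 1 / 2 → ¬ AccPt z (𝓟 (SZ ∪ SP))) :
    ∃ (χ : ℕ → ℂ) (F : ℂ → ℂ),
      CompletelyMultiplicative χ ∧
      (∀ n : ℕ, 1 ≤ n → χ n ∈ ({1, Complex.exp (2 * Real.pi * Complex.I / 3),
          Complex.exp (-(2 * Real.pi * Complex.I) / 3)} : Set ℂ)) ∧
      MeromorphicOn F {s : ℂ | 1 / 2 < s.re} ∧
      (∀ s : ℂ, 1 < s.re → F s = helsonZeta χ s) ∧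
      AnalyticOnNhd ℂ F ({s : ℂ | 1 / 2 < s.re} \ SP) ∧
      (∀ s : ℂ, 1 / 2 < s.re → s ∉ SP → (F s = 0 ↔ s ∈ SZ)) ∧
      (∀ s ∈ SZ, ZeroOfOrder F s (mZ s)) ∧
      (∀ s ∈ SP, PoleOfOrder F s (mP s)) := by
  have hUo : IsOpen {s : ℂ | 1 / 2 < s.re} := isOpen_lt continuous_const Complex.continuous_re
  obtain ⟨V, hV, hVP⟩ := exists_primeZeta_continuation hRH
  obtain ⟨fZ, GZ, hfZ, hGZd, hGZ0, hGZord, hGZe⟩ := exists_zeroFunction hV hVP hZstrip hmZ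
    fun z hz h => hacc z hz (h.mono (principal_mono.2 subset_union_left))
  obtain ⟨fP, GP, hfP, hGPd, hGP0, hGPord, hGPe⟩ := exists_zeroFunction hV hVP hPstrip hmP
    fun z hz h => hacc z hz (h.mono (principal_mono.2 subset_union_right))
  obtain ⟨c, hc3, hcsum⟩ := exists_greedy (f := fun n => fP n - fZ n) fun n hn => by
    refine (norm_sub_le _ _).trans ?_
    have h1 := hfP n hn
    have h2 := hfZ n hn
    linarith
  obtain ⟨D, hDd, hD⟩ := exists_lseries_onPrimes_continuation hcsum
  have hcn : ∀ n, ‖c n‖ ≤ 1 := fun n =>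
    (Complex.norm_eq_one_of_pow_eq_one (hc3 n) (by norm_num)).le
  set χ := multExt c with hχdef
  have hχ1 : ∀ n, ‖χ n‖ ≤ 1 := by
    intro n
    rcases eq_or_ne n 0 with rfl | hn
    · simp
    · exact (Complex.norm_eq_one_of_pow_eq_one (multExt_pow_three hc3 hn) (by norm_num)).le
  let E : ℂ → ℂ := fun s => exp (D s + eulerRem χ s)
  have hEd : DifferentiableOn ℂ E {s : ℂ | 1 / 2 < s.re} := by
    refine ((hDd.mono fun s hs => ?_).add (differentiableOn_eulerRem hχ1)).cexp
    have : 1 / 2 < s.re := hs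
    change 0 < s.re
    linarith
  have hEa : ∀ s : ℂ, 1 / 2 < s.re → AnalyticAt ℂ E s := fun s hs =>
    hEd.analyticAt (hUo.mem_nhds hs)
  have hZa : ∀ s : ℂ, 1 / 2 < s.re → AnalyticAt ℂ GZ s := fun s hs =>
    hGZd.analyticAt (hUo.mem_nhds hs)
  have hPa : ∀ s : ℂ, 1 / 2 < s.re → AnalyticAt ℂ GP s := fun s hs =>
    hGPd.analyticAt (hUo.mem_nhds hs)
  refine ⟨χ, fun s => E s * GZ s / GP s, ⟨map_one χ, map_mul χ⟩, fun n hn => ?_, fun s hs => ?_,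
    fun s hs => ?_, fun s hs => ?_, fun s hs hsP => ?_, fun s hs => ?_, fun s hs => ?_⟩
  · exact mem_of_pow_three_eq_one (multExt_pow_three hc3 (by omega))
  · exact ((hEa s hs).mul (hZa s hs)).meromorphicAt.div (hPa s hs).meromorphicAt
  · have hon : onPrimes χ = onPrimes (fun n => c n - (fP n - fZ n)) + onPrimes fP - onPrimes fZ := by
      funext n
      simp only [onPrimes, Pi.add_apply, Pi.sub_apply]
      split_ifs with hn
      · rw [hχdef, multExt_prime c hn]; ring
      · simp
    have hsC : LSeriesSummable (onPrimes (fun n => c n - (fP n - fZ n))) s := by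
      refine lseriesSummable_onPrimes (C := 1 + (1 / 16 + 1 / 16)) (fun n hn => ?_) hs
      exact (norm_sub_le _ _).trans (add_le_add (hcn n)
        ((norm_sub_le _ _).trans (add_le_add (hfP n hn) (hfZ n hn))))
    have hsP := lseriesSummable_onPrimes hfP hs
    have hsZ := lseriesSummable_onPrimes hfZ hs
    have hL : LSeries (onPrimes χ) s =
        D s + LSeries (onPrimes fP) s - LSeries (onPrimes fZ) s := by
      rw [hon, LSeries_sub (hsC.add hsP) hsZ, LSeries_add hsC hsP, hD s (by linarith) hsC]
    rw [helsonZeta_eq_tsum, ← exp_onPrimes_add_eulerRem χ hχ1 hs, hL]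
    have h1 := hGZe s hs
    have h2 := hGPe s hs
    have hP0 : GP s ≠ 0 := left_ne_zero_of_mul_eq_one h2
    have e1 : exp (D s + LSeries (onPrimes fP) s - LSeries (onPrimes fZ) s + eulerRem χ s) *
        exp (LSeries (onPrimes fZ) s) = E s * exp (LSeries (onPrimes fP) s) := by
      rw [← exp_add, ← exp_add]
      congr 1
      ring
    rw [div_eq_iff hP0]
    set X := exp (D s + LSeries (onPrimes fP) s - LSeries (onPrimes fZ) s + eulerRem χ s)
    linear_combination (X * GP s) * h1 - (E s * GZ s) * h2 - (GZ s * GP s) * e1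
  · exact ((hEa s hs.1).mul (hZa s hs.1)).div (hPa s hs.1) fun h => hs.2 ((hGP0 s hs.1).1 h)
  · have hP0 : GP s ≠ 0 := fun h => hsP ((hGP0 s hs).1 h)
    rw [← hGZ0 s hs]
    simp [hP0, E, exp_ne_zero]
  · obtain ⟨g, hg, hg0, hev⟩ := hGZord s hs
    have hsU := (hZstrip s hs).1
    have hP0 : GP s ≠ 0 := fun h => disjoint_left.1 hdisj hs ((hGP0 s hsU).1 h)
    refine ⟨fun z => E z * g z / GP z, ((hEa s hsU).mul hg).div (hPa s hsU) hP0,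
      div_ne_zero (mul_ne_zero (exp_ne_zero _) hg0) hP0, ?_⟩
    filter_upwards [hev] with z hz
    rw [hz]
    ring
  · obtain ⟨g, hg, hg0, hev⟩ := hGPord s hs
    have hsU := (hPstrip s hs).1
    have hZ0 : GZ s ≠ 0 := fun h => disjoint_right.1 hdisj hs ((hGZ0 s hsU).1 h)
    refine ⟨fun z => E z * GZ z / g z, ((hEa s hsU).mul (hZa s hsU)).div hg hg0,
      div_ne_zero (mul_ne_zero (exp_ne_zero _) hZ0) hg0, ?_⟩
    filter_upwards [nhdsWithin_le_nhds hev] with z hz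
    rw [hz, zpow_neg, zpow_natCast, div_mul_eq_div_div, div_eq_mul_inv, div_eq_mul_inv,
      div_eq_mul_inv]
    ring
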